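/- Let d ≥ 1 and let 1 ≤ p, q ≤ ∞ be such that (1/p, 1/q) lies in the (closed) pentagon Ω with vertices (1/2, 1), (1, 1), (1, 1/2), (3/4, (log₂ 3)/2 − 1/4) and ((log₂ 3)/2 − 1/4, 3/4). Then the inequality ‖f*g‖_{ℓ^2(ℤ^d)} ≤ ‖f‖_{ℓ^p(ℤ^d)} ‖g‖_{ℓ^q(ℤ^d)} holds for all f, g : ℤ^d → ℝ supported in {0,1}^d. -/

import Mathlib

open scoped BigOperators ENNReal

/-- Convolution of two functions on `ℤ^d`. -/
noncomputable def cconv {d : ℕ} (f g : (Fin d → ℤ) → ℝ) : (Fin d → ℤ) → ℝ :=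
  fun m => ∑' u : Fin d → ℤ, f u * g (m - u)

/-- A point of `ℤ^d` lies in the hypercube `{0,1}^d`. -/
def InCube {d : ℕ} (x : Fin d → ℤ) : Prop := ∀ i, x i = 0 ∨ x i = 1

/-- A function on `ℤ^d` is supported in `{0,1}^d`. -/
def SupportedInCube {d : ℕ} (f : (Fin d → ℤ) → ℝ) : Prop :=
  ∀ x : Fin d → ℤ, ¬ InCube x → f x = 0

/-- The `ℓ^s` norm of a function on `ℤ^d` (for `0 < s < ∞`). -/
noncomputable def lnorm {d : ℕ} (s : ℝ) (f : (Fin d → ℤ) → ℝ) : ℝ :=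
  (∑' x : Fin d → ℤ, |f x| ^ s) ^ (1 / s)


/-- The `ℓ^s` norm for an extended exponent `s ∈ (0,∞]`:
for `s = ∞` it is the sup norm, otherwise the usual `ℓ^s` norm. -/
noncomputable def lnormE {d : ℕ} (s : ℝ≥0∞) (f : (Fin d → ℤ) → ℝ) : ℝ :=
  if s = ∞ then ⨆ x : Fin d → ℤ, |f x|
  else (∑' x : Fin d → ℤ, |f x| ^ s.toReal) ^ (1 / s.toReal)

lemma yh_T {κ s t : ℝ} (hκ : 0 < κ) (hs : 2 ≤ s) (hst : s ≤ t)
    (h1 : κ * (t^3+t^2-2*t+1) < (3-t)*(1+t)) (h2 : (3-s)*(1+s) < κ * (s^3+s^2-2*s+1)) : False := by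
  have e1 : (3-t)*(1+t) ≤ (3-s)*(1+s) := by nlinarith
  have e2 : s^3+s^2-2*s+1 ≤ t^3+t^2-2*t+1 := by nlinarith [mul_nonneg (sub_nonneg.2 hst) (by nlinarith : 0 ≤ t^2+s*t+s^2+t+s-2)]
  have := mul_le_mul_of_nonneg_left e2 hκ.le
  linarith

lemma yh_psi_deriv (k x : ℝ) (hx : 0 < x) :
    HasDerivAt (fun x : ℝ => (k - 1) * Real.log x - Real.log (1+x+x^3) + Real.log (1+x^2+x^3))
      ((k-1) * x⁻¹ - (1+3*x^2)/(1+x+x^3) + (2*x+3*x^2)/(1+x^2+x^3)) x := by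
  have d1 : HasDerivAt (fun x : ℝ => 1+x+x^3) (1+3*x^2) x := by
    have := ((hasDerivAt_id x).const_add 1).fun_add (hasDerivAt_pow 3 x)
    simpa using this
  have d2 : HasDerivAt (fun x : ℝ => 1+x^2+x^3) (2*x+3*x^2) x := by
    have := ((hasDerivAt_pow 2 x).const_add 1).fun_add (hasDerivAt_pow 3 x)
    simpa using this
  exact (((Real.hasDerivAt_log hx.ne').const_mul (k-1)).sub (d1.log (by positivity))).add (d2.log (by positivity))

lemma yh_psi_eq (k x : ℝ) (hx : 0 < x) :
    (k-1) * x⁻¹ - (1+3*x^2)/(1+x+x^3) + (2*x+3*x^2)/(1+x^2+x^3)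
      = x^2/((1+x+x^3)*(1+x^2+x^3)) *
        ((3-(x+x⁻¹))*(1+(x+x⁻¹)) - (1-k)*((x+x⁻¹)^3+(x+x⁻¹)^2-2*(x+x⁻¹)+1)) := by
  have : 1+x+x^3 ≠ 0 := by positivity
  have : 1+x^2+x^3 ≠ 0 := by positivity
  field_simp
  ring

lemma yh_h_deriv (k x : ℝ) (hk : 0 < k) (hx : 0 < x) :
    HasDerivAt (fun x : ℝ => Real.log (1+x^2) + (2/k) * Real.log (1+x^k) - 2 * Real.log (1+x+x^2))
      (2*x/(1+x^2) + (2/k) * ((k * x^(k-1)) / (1+x^k)) - 2 * ((1+2*x)/(1+x+x^2))) x := by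
  have d1 : HasDerivAt (fun x : ℝ => 1+x+x^2) (1+2*x) x := by
    have := ((hasDerivAt_id x).const_add 1).fun_add (hasDerivAt_pow 2 x)
    simpa using this
  have d2 : HasDerivAt (fun x : ℝ => 1+x^2) (2*x) x := by
    have := ((hasDerivAt_pow 2 x).const_add 1)
    simpa using this
  have d3 : HasDerivAt (fun x : ℝ => 1+x^k) (k * x^(k-1)) x :=
    (Real.hasDerivAt_rpow_const (Or.inl hx.ne')).const_add 1
  have : 0 < x^k := Real.rpow_pos_of_pos hx k
  exact ((d2.log (by positivity)).add ((d3.log (by positivity)).const_mul (2/k))).sub ((d1.log (by positivity)).const_mul 2)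

lemma yh_h_eq (k x : ℝ) (hk : 0 < k) (hx : 0 < x) :
    2*x/(1+x^2) + (2/k) * ((k * x^(k-1)) / (1+x^k)) - 2 * ((1+2*x)/(1+x+x^2))
     = 2/(x*(1+x^2)*(1+x^k)*(1+x+x^2)) * (x^k*(1+x^2+x^3) - x*(1+x+x^3)) := by
  have : 0 < x^k := Real.rpow_pos_of_pos hx k
  rw [Real.rpow_sub_one hx.ne']
  generalize x^k = X at *
  have : 1+X ≠ 0 := by positivity
  have : 1+x+x^2 ≠ 0 := by positivity
  field_simp
  ring

lemma yh_psi_log (k x : ℝ) (hx : 0 < x) :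
    (k - 1) * Real.log x - Real.log (1+x+x^3) + Real.log (1+x^2+x^3) =
      Real.log (x^k*(1+x^2+x^3)) - Real.log (x*(1+x+x^3)) := by
  have : 0 < x^k := Real.rpow_pos_of_pos hx k
  rw [Real.log_mul (by positivity) (by positivity), Real.log_mul (by positivity) (by positivity),
    Real.log_rpow hx]
  ring

lemma yh_h (k : ℝ) (hk : 0 < k) (hk1 : k < 1) (h1 : Real.log 2 + (2/k) * Real.log 2 = 2 * Real.log 3)
    (x : ℝ) (hx0 : 0 ≤ x) (hx1 : x ≤ 1) :
    2 * Real.log (1+x+x^2) ≤ Real.log (1+x^2) + (2/k) * Real.log (1+x^k) := by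
  by_contra hcon
  push Not at hcon
  set h : ℝ → ℝ := fun x : ℝ => Real.log (1+x^2) + (2/k) * Real.log (1+x^k) - 2 * Real.log (1+x+x^2) with hh
  set ψ : ℝ → ℝ := fun x : ℝ => (k - 1) * Real.log x - Real.log (1+x+x^3) + Real.log (1+x^2+x^3) with hψ
  have hneg : h x < 0 := by simp only [hh]; linarith
  have h0 : h 0 = 0 := by simp [hh, Real.zero_rpow hk.ne']
  have h1' : h 1 = 0 := by simp only [hh]; norm_num; linarith
  have ψ1 : ψ 1 = 0 := by simp only [hψ]; norm_num
  have hx0' : 0 < x := lt_of_le_of_ne hx0 (by rintro rfl; linarith)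
  have hx1' : x < 1 := lt_of_le_of_ne hx1 (by rintro rfl; linarith)
  have hcont : ContinuousOn h (Set.Ici 0) := by
    intro y hy
    have hy : 0 ≤ y := hy
    have : 0 ≤ y^k := Real.rpow_nonneg hy k
    apply ContinuousAt.continuousWithinAt
    have c3 : ContinuousAt (fun x : ℝ => 1+x^k) y :=
      continuousAt_const.add (Real.continuousAt_rpow_const y k (Or.inr hk.le))
    have c1 : ContinuousAt (fun x : ℝ => 1+x^2) y := by fun_prop
    have c2 : ContinuousAt (fun x : ℝ => 1+x+x^2) y := by fun_prop
    exact ((c1.log (by positivity)).add ((c3.log (by positivity)).const_mul (2/k))).sub ((c2.log (by positivity)).const_mul 2)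
  have ψcont : ContinuousOn ψ (Set.Ioi 0) := fun y hy => (yh_psi_deriv k y hy).continuousAt.continuousWithinAt
  obtain ⟨x1, ⟨hx1a, hx1b⟩, e1⟩ := exists_hasDerivAt_eq_slope h _ hx0'
    (hcont.mono (fun y hy => hy.1)) (fun y hy => yh_h_deriv k y hk hy.1)
  obtain ⟨x2, ⟨hx2a, hx2b⟩, e2⟩ := exists_hasDerivAt_eq_slope h _ hx1'
    (hcont.mono (fun y hy => hx0.trans hy.1)) (fun y hy => yh_h_deriv k y hk (hx0'.trans hy.1))
  have hx2 : 0 < x2 := hx0'.trans hx2a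
  rw [yh_h_eq k x1 hk hx1a, h0] at e1
  rw [yh_h_eq k x2 hk hx2, h1'] at e2
  have s1 : (h x - 0)/(x-0) < 0 := div_neg_of_neg_of_pos (by linarith) (by linarith)
  have s2 : 0 < (0 - h x)/(1-x) := div_pos (by linarith) (by linarith)
  rw [← e1] at s1
  rw [← e2] at s2
  have p1 : 0 < x1^k := Real.rpow_pos_of_pos hx1a k
  have p2 : 0 < x2^k := Real.rpow_pos_of_pos hx2 k
  have t1 := neg_of_mul_neg_right s1 (by positivity)
  have t2 := pos_of_mul_pos_right s2 (by positivity)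
  have u1 : ψ x1 < 0 := by
    simp only [hψ]; rw [yh_psi_log k x1 hx1a]
    have := Real.log_lt_log (by positivity) (sub_neg.1 t1)
    linarith
  have u2 : 0 < ψ x2 := by
    simp only [hψ]; rw [yh_psi_log k x2 hx2]
    have := Real.log_lt_log (by positivity) (sub_pos.1 t2)
    linarith
  have hx12 : x1 < x2 := hx1b.trans hx2a
  obtain ⟨x3, ⟨hx3a, hx3b⟩, e3⟩ := exists_hasDerivAt_eq_slope ψ _ hx12
    (ψcont.mono (fun y hy => hx1a.trans_le hy.1)) (fun y hy => yh_psi_deriv k y (hx1a.trans hy.1))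
  obtain ⟨x4, ⟨hx4a, hx4b⟩, e4⟩ := exists_hasDerivAt_eq_slope ψ _ hx2b
    (ψcont.mono (fun y hy => hx2.trans_le hy.1)) (fun y hy => yh_psi_deriv k y (hx2.trans hy.1))
  have hx3 : 0 < x3 := hx1a.trans hx3a
  have hx4 : 0 < x4 := hx2.trans hx4a
  have s3 : 0 < (ψ x2 - ψ x1)/(x2-x1) := div_pos (by linarith) (by linarith)
  have s4 : (ψ 1 - ψ x2)/(1-x2) < 0 := div_neg_of_neg_of_pos (by linarith) (by linarith)
  rw [← e3, yh_psi_eq k x3 hx3] at s3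
  rw [← e4, yh_psi_eq k x4 hx4] at s4
  have t3 := pos_of_mul_pos_right s3 (by positivity)
  have t4 := neg_of_mul_neg_right s4 (by positivity)
  refine yh_T (κ := 1 - k) (s := x4 + x4⁻¹) (t := x3 + x3⁻¹) (by linarith) ?_ ?_ (by linarith) (by linarith)
  · have : x4 + x4⁻¹ - 2 = (x4-1)^2/x4 := by field_simp; ring
    have : 0 ≤ (x4-1)^2/x4 := by positivity
    linarith
  · have : x3 + x3⁻¹ - (x4 + x4⁻¹) = (x4-x3)*(1-x3*x4)/(x3*x4) := by field_simp; ring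
    have h34 : x3 < x4 := hx3b.trans hx4a
    have : 0 ≤ (x4-x3)*(1-x3*x4)/(x3*x4) := by
      apply div_nonneg _ (by positivity)
      have h5 : x3*x4 ≤ 1*1 := mul_le_mul (h34.le.trans hx4b.le) hx4b.le hx4.le zero_le_one
      exact mul_nonneg (by linarith) (by linarith)
    linarith

/-- polynomial step -/
lemma yh_poly {m n G H : ℝ} (hmn : m^4+n^4 = 1)
    (hK : 0 < G^2-2*H^2) (h : (G^2-H^2)^2 ≤ G^2-2*H^2) :
    (m^6+n^6)*G + 2*(m*n)^3*H ≤ 1 := by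
  obtain ⟨K, hK0, hK2⟩ : ∃ K : ℝ, 0 < K ∧ K^2 = G^2-2*H^2 :=
    ⟨√(G^2-2*H^2), Real.sqrt_pos.2 hK, Real.sq_sqrt hK.le⟩
  have hle : G^2-H^2 ≤ K := by
    rw [← hK2] at h
    exact le_of_sq_le_sq h hK0.le
  obtain ⟨g, rfl⟩ : ∃ g, G = K*g := ⟨G/K, by field_simp⟩
  obtain ⟨t, rfl⟩ : ∃ t, H = K*t := ⟨H/K, by field_simp⟩
  have hg : g^2 - 2*t^2 = 1 := by
    have : K^2*(g^2-2*t^2-1) = 0 := by linarith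
    rcases mul_eq_zero.1 this with h | h
    · exact absurd h (by positivity)
    · linarith
  have hb : (m*n)^2 ≤ 1 := by nlinarith [sq_nonneg (m^2-n^2)]
  have key : (m^6+n^6)*g + 2*(m*n)^3*t ≤ g^2 - t^2 := by
    have e : m^6+n^6 = (m^2+n^2)*(1-(m*n)^2) := by rw [← hmn]; ring
    have a2 : (m^2+n^2)^2 = 1 + 2*(m*n)^2 := by rw [← hmn]; ring
    rw [e]
    generalize m^2+n^2 = a at *
    generalize m*n = b at *
    have h1 : a*g ≤ 1+b^2+t^2 := by nlinarith [sq_nonneg (a-g)]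
    have h2 := mul_le_mul_of_nonneg_left h1 (sub_nonneg.2 hb)
    nlinarith [mul_nonneg (sq_nonneg b) (sq_nonneg (b-t))]
  calc _ = K * ((m^6+n^6)*g + 2*(m*n)^3*t) := by ring
    _ ≤ K * (g^2-t^2) := by gcongr
    _ ≤ 1 := by
      have : K*(K*(g^2-t^2)) ≤ K*1 := by nlinarith
      exact le_of_mul_le_mul_left this hK0

noncomputable def yhY : ℝ := Real.logb 2 3 / 2 - 1 / 4

lemma yhY_half : 1/2 < yhY := by
  have h : (3/2 : ℝ) < Real.logb 2 3 := by
    have : Real.logb 2 9 = 2 * Real.logb 2 3 := by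
      rw [show (9:ℝ) = 3^2 by norm_num, Real.logb_pow]; norm_num
    have h8 : Real.logb 2 8 = 3 := by
      rw [show (8:ℝ) = 2^3 by norm_num, Real.logb_pow]; norm_num
    have := Real.logb_lt_logb (b := 2) (by norm_num) (by norm_num : (0:ℝ) < 8) (by norm_num : (8:ℝ) < 9)
    linarith
  unfold yhY; linarith

lemma yhY_log : Real.log 2 + 4 * yhY * Real.log 2 = 2 * Real.log 3 := by
  have : Real.log 2 ≠ 0 := (Real.log_pos (by norm_num)).ne'
  unfold yhY Real.logb
  field_simp
  ring

lemma yh_c_aux {γ δ : ℝ} (hγ : 0 < γ) (hδ : 0 < δ) (h : γ + δ = 1) (hle : γ ≤ δ) :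
    ((γ^yhY)^4 + (γ^yhY)^2*(δ^yhY)^2 + (δ^yhY)^4)^2 ≤ (γ^yhY)^4 + (δ^yhY)^4 := by
  have hy := yhY_half
  have hy0 : 0 < yhY := by linarith
  have hr : 0 < γ/δ := by positivity
  have hr1 : γ/δ ≤ 1 := (div_le_one hδ).2 hle
  set t := (γ/δ)^(2*yhY) with ht
  have htp : 0 < t := Real.rpow_pos_of_pos hr _
  have ht1 : t ≤ 1 := Real.rpow_le_one hr.le hr1 (by linarith)
  have hk : 2/(1/(2*yhY)) = 4*yhY := by field_simp; ring
  have H := yh_h (1/(2*yhY)) (by positivity) (by rw [div_lt_one (by positivity)]; linarith)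
    (by rw [hk]; exact yhY_log) t htp.le ht1
  have e1 : t^(1/(2*yhY)) = γ/δ := by
    rw [ht, ← Real.rpow_mul hr.le, mul_one_div_cancel (by positivity), Real.rpow_one]
  have e2 : 1 + γ/δ = δ⁻¹ := by field_simp; linarith
  rw [hk, e1, e2, Real.log_inv] at H
  have e3 : (γ^yhY)^2 = t * (δ^yhY)^2 := by
    have : t = (γ^yhY / δ^yhY)^2 := by
      rw [ht, mul_comm, Real.rpow_mul hr.le, Real.div_rpow hγ.le hδ.le]; norm_num
    have hp : 0 < δ^yhY := Real.rpow_pos_of_pos hδ _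
    rw [this]; field_simp
  have e4 : Real.log ((δ^yhY)^4) = 4*yhY*Real.log δ := by
    rw [Real.log_pow, Real.log_rpow hδ]; push_cast; ring
  have hp : 0 < (δ^yhY)^4 := pow_pos (Real.rpow_pos_of_pos hδ _) 4
  have key : (δ^yhY)^4 * (1+t+t^2)^2 ≤ 1+t^2 := by
    rw [← Real.log_le_log_iff (by positivity) (by positivity), Real.log_mul (by positivity) (by positivity), e4, Real.log_pow]
    push_cast; linarith
  have e5 : (γ^yhY)^4 = t^2*(δ^yhY)^4 := by
    rw [show (γ^yhY)^4 = ((γ^yhY)^2)^2 by ring, e3]; ring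
  rw [e5, e3]
  generalize δ^yhY = e at *
  calc _ = e^4 * (e^4 * (1+t+t^2)^2) := by ring
    _ ≤ e^4 * (1+t^2) := by gcongr
    _ = _ := by ring

lemma yh_c {γ δ : ℝ} (hγ : 0 < γ) (hδ : 0 < δ) (h : γ + δ = 1) :
    ((γ^yhY)^4 + (γ^yhY)^2*(δ^yhY)^2 + (δ^yhY)^4)^2 ≤ (γ^yhY)^4 + (δ^yhY)^4 := by
  rcases le_total γ δ with h1 | h1
  · exact yh_c_aux hγ hδ h h1
  · have := yh_c_aux hδ hγ (by linarith) h1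
    linarith

/-- The two-point expression. -/
noncomputable def yhΦ (α β γ δ : ℝ) (v : ℝ × ℝ) : ℝ :=
  (α^v.1*γ^v.2)^2 + (α^v.1*δ^v.2 + β^v.1*γ^v.2)^2 + (β^v.1*δ^v.2)^2

lemma yh_vertex {α β γ δ : ℝ} (hα : 0 < α) (hβ : 0 < β) (hγ : 0 < γ) (hδ : 0 < δ)
    (hab : α + β = 1) (hcd : γ + δ = 1) : yhΦ α β γ δ (3/4, yhY) ≤ 1 := by
  have q : ∀ a : ℝ, 0 < a → (a^(1/4:ℝ))^4 = a ∧ a^(3/4:ℝ) = (a^(1/4:ℝ))^3 := by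
    intro a ha
    constructor
    · rw [← Real.rpow_mul_natCast ha.le]; norm_num
    · rw [← Real.rpow_mul_natCast ha.le]; norm_num
  have hc := yh_c hγ hδ hcd
  have c0 : 0 < γ^yhY := Real.rpow_pos_of_pos hγ _
  have e0 : 0 < δ^yhY := Real.rpow_pos_of_pos hδ _
  unfold yhΦ
  simp only
  rw [(q α hα).2, (q β hβ).2]
  generalize γ^yhY = c at *
  generalize δ^yhY = e at *
  have := yh_poly (m := α^(1/4:ℝ)) (n := β^(1/4:ℝ)) (G := c^2+e^2) (H := c*e)
    (by rw [(q α hα).1, (q β hβ).1, hab])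
    (by have : (c^2+e^2)^2-2*(c*e)^2 = c^4+e^4 := by ring
        rw [this]; positivity)
    (by convert hc using 1 <;> ring)
  refine le_trans (le_of_eq ?_) this
  ring

lemma yhΦ_swap (α β γ δ x y : ℝ) : yhΦ α β γ δ (x, y) = yhΦ γ δ α β (y, x) := by
  unfold yhΦ; simp only; ring

lemma yh_vertex2 {α β γ δ : ℝ} (hα : 0 < α) (hβ : 0 < β) (hγ : 0 < γ) (hδ : 0 < δ)
    (hab : α + β = 1) (hcd : γ + δ = 1) : yhΦ α β γ δ (1/2, 1) ≤ 1 := by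
  have q : ∀ a : ℝ, 0 < a → (a^(1/2:ℝ))^2 = a := by
    intro a ha
    rw [← Real.rpow_mul_natCast ha.le]; norm_num
  unfold yhΦ
  simp only [Real.rpow_one]
  have h1 := q α hα
  have h2 := q β hβ
  generalize α^(1/2:ℝ) = m at *
  generalize β^(1/2:ℝ) = n at *
  subst h1 h2
  have : 2*m*n*(γ*δ) ≤ 1*(γ*δ) := by
    apply mul_le_mul_of_nonneg_right _ (by positivity)
    nlinarith [sq_nonneg (m-n)]
  have e : (m*γ)^2 + (m*δ+n*γ)^2+(n*δ)^2 = (m^2+n^2)*(γ^2+δ^2) + 2*m*n*(γ*δ) := by ring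
  rw [e, hab]
  have : (γ+δ)^2 = 1 := by rw [hcd]; norm_num
  nlinarith [mul_pos hγ hδ]

lemma yh_vertex3 {α β γ δ : ℝ} (hα : 0 < α) (hβ : 0 < β) (hγ : 0 < γ) (hδ : 0 < δ)
    (hab : α + β = 1) (hcd : γ + δ = 1) : yhΦ α β γ δ (1, 1) ≤ 1 := by
  unfold yhΦ
  simp only [Real.rpow_one]
  have : ((α+β)*(γ+δ))^2 = 1 := by rw [hab, hcd]; norm_num
  rw [← this]
  have := mul_pos hα hβ
  have := mul_pos hγ hδ
  have : 0 ≤ 2*(α*β)*(γ^2+δ^2) + 2*(γ*δ)*(α^2+β^2) + 2*(α*β)*(γ*δ) := by positivity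
  linarith

lemma yh_exp_convex (a b : ℝ) : ConvexOn ℝ Set.univ (fun v : ℝ × ℝ => Real.exp (v.1*a+v.2*b)) := by
  have := convexOn_exp.comp_linearMap (a • LinearMap.fst ℝ ℝ ℝ + b • LinearMap.snd ℝ ℝ ℝ)
  refine ConvexOn.congr this ?_
  intro v _
  simp [mul_comm]

lemma yhΦ_convex {α β γ δ : ℝ} (hα : 0 < α) (hβ : 0 < β) (hγ : 0 < γ) (hδ : 0 < δ) :
    ConvexOn ℝ Set.univ (yhΦ α β γ δ) := by
  have h := (((yh_exp_convex (2*Real.log α) (2*Real.log γ)).add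
    (yh_exp_convex (2*Real.log α) (2*Real.log δ))).add
    ((yh_exp_convex (Real.log α + Real.log β) (Real.log γ+Real.log δ)).smul (c := 2) (by norm_num))).add
    ((yh_exp_convex (2*Real.log β) (2*Real.log γ)).add (yh_exp_convex (2*Real.log β) (2*Real.log δ)))
  refine ConvexOn.congr h ?_
  intro v _
  have e : ∀ a b : ℝ, Real.exp (v.1*(2*a)+v.2*(2*b)) = (Real.exp (a*v.1) * Real.exp (b*v.2))^2 := by
    intro a b
    rw [← Real.exp_add, ← Real.exp_nat_mul]; congr 1; push_cast; ring
  have e' : Real.exp (v.1*(Real.log α + Real.log β)+v.2*(Real.log γ+Real.log δ)) =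
     Real.exp (Real.log α*v.1) * Real.exp (Real.log β*v.1)*Real.exp (Real.log γ*v.2) * Real.exp (Real.log δ*v.2) := by
    rw [← Real.exp_add, ← Real.exp_add, ← Real.exp_add]; congr 1; ring
  simp only [yhΦ, Pi.add_apply, Real.rpow_def_of_pos, hα, hβ, hγ, hδ, e, e', smul_eq_mul]
  ring

abbrev yhΩ : Set (ℝ × ℝ) := convexHull ℝ ({(1 / 2, 1), (1, 1), (1, 1 / 2),
        (3 / 4, Real.logb 2 3 / 2 - 1 / 4),
        (Real.logb 2 3 / 2 - 1 / 4, 3 / 4)} : Set (ℝ × ℝ))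

lemma yhΩ_half {v : ℝ × ℝ} (hv : v ∈ yhΩ) : 1/2 ≤ v.1 ∧ 1/2 ≤ v.2 := by
  have hc : Convex ℝ (Set.Ici ((1/2, 1/2) : ℝ × ℝ)) := convex_Ici _
  have hy := yhY_half
  unfold yhY at hy
  have := convexHull_min (s := ({(1 / 2, 1), (1, 1), (1, 1 / 2),
        (3 / 4, Real.logb 2 3 / 2 - 1 / 4),
        (Real.logb 2 3 / 2 - 1 / 4, 3 / 4)} : Set (ℝ × ℝ))) ?_ hc hv
  · exact this
  · rintro w (rfl | rfl | rfl | rfl | rfl) <;> constructor <;> norm_num <;> linarith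

lemma yhΦ_pos {α β γ δ : ℝ} (hα : 0 < α) (hβ : 0 < β) (hγ : 0 < γ) (hδ : 0 < δ)
    (hab : α + β = 1) (hcd : γ + δ = 1) {v : ℝ × ℝ} (hv : v ∈ yhΩ) : yhΦ α β γ δ v ≤ 1 := by
  have hc := (yhΦ_convex hα hβ hγ hδ).convex_le 1
  refine (convexHull_min ?_ hc hv).2
  rintro w (rfl | rfl | rfl | rfl | rfl) <;> refine ⟨trivial, ?_⟩
  · exact yh_vertex2 hα hβ hγ hδ hab hcd
  · exact yh_vertex3 hα hβ hγ hδ hab hcd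
  · rw [yhΦ_swap]; exact yh_vertex2 hγ hδ hα hβ hcd hab
  · exact yh_vertex hα hβ hγ hδ hab hcd
  · rw [yhΦ_swap]; exact yh_vertex hγ hδ hα hβ hcd hab

lemma yh_sq {γ δ y : ℝ} (hγ : 0 ≤ γ) (hδ : 0 ≤ δ) (hcd : γ + δ = 1) (hy : 1/2 ≤ y) :
    (γ^y)^2 + (δ^y)^2 ≤ 1 := by
  have q : ∀ a : ℝ, 0 ≤ a → a ≤ 1 → (a^y)^2 ≤ a := by
    intro a ha ha1
    rw [← Real.rpow_mul_natCast ha]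
    calc a^(y*(2:ℕ)) ≤ a^(1:ℝ) := by
          rcases ha.eq_or_lt with rfl | h
          · rw [Real.zero_rpow (by push_cast; linarith), Real.zero_rpow (by norm_num)]
          · exact Real.rpow_le_rpow_of_exponent_ge h ha1 (by push_cast; linarith)
      _ = a := Real.rpow_one a
  have := q γ hγ (by linarith)
  have := q δ hδ (by linarith)
  linarith

lemma yhΦ_nonneg {α β γ δ : ℝ} (hα : 0 ≤ α) (hβ : 0 ≤ β) (hγ : 0 ≤ γ) (hδ : 0 ≤ δ)
    (hab : α + β = 1) (hcd : γ + δ = 1) {v : ℝ × ℝ} (hv : v ∈ yhΩ) : yhΦ α β γ δ v ≤ 1 := by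
  obtain ⟨h1, h2⟩ := yhΩ_half hv
  have n1 : v.1 ≠ 0 := by linarith
  have n2 : v.2 ≠ 0 := by linarith
  have s1 := yh_sq hα hβ hab h1
  have s2 := yh_sq hγ hδ hcd h2
  rcases hα.eq_or_lt with rfl | hα'
  · obtain rfl : β = 1 := by linarith
    simp only [yhΦ, Real.zero_rpow n1, Real.one_rpow]; linarith
  rcases hβ.eq_or_lt with rfl | hβ'
  · obtain rfl : α = 1 := by linarith
    simp only [yhΦ, Real.zero_rpow n1, Real.one_rpow]; linarith
  rcases hγ.eq_or_lt with rfl | hγ'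
  · obtain rfl : δ = 1 := by linarith
    simp only [yhΦ, Real.zero_rpow n2, Real.one_rpow]; linarith
  rcases hδ.eq_or_lt with rfl | hδ'
  · obtain rfl : γ = 1 := by linarith
    simp only [yhΦ, Real.zero_rpow n2, Real.one_rpow]; linarith
  exact yhΦ_pos hα' hβ' hγ' hδ' hab hcd hv

lemma yh_norm {a b p : ℝ} (ha : 0 ≤ a) (hb : 0 ≤ b) (hp : 0 < p) :
    ∃ α β N : ℝ, 0 ≤ α ∧ 0 ≤ β ∧ α + β = 1 ∧ N = (a^p+b^p)^(1/p) ∧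
      a = N * α^(1/p) ∧ b = N * β^(1/p) := by
  have h1 := Real.rpow_nonneg ha p
  have h2 := Real.rpow_nonneg hb p
  have r : ∀ a : ℝ, 0 ≤ a → (a^p)^(1/p) = a := fun a ha => by
    rw [← Real.rpow_mul ha, mul_one_div_cancel hp.ne', Real.rpow_one]
  rcases (add_nonneg h1 h2).eq_or_lt with h | h
  · refine ⟨1, 0, _, by norm_num, by norm_num, by norm_num, rfl, ?_, ?_⟩
    · have : a^p = 0 := by linarith
      have := (Real.rpow_eq_zero ha hp.ne').1 this
      rw [← h, Real.zero_rpow (by positivity), this]; simp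
    · have : b^p = 0 := by linarith
      have := (Real.rpow_eq_zero hb hp.ne').1 this
      rw [← h, Real.zero_rpow (by positivity), this]; simp
  · refine ⟨a^p/(a^p+b^p), b^p/(a^p+b^p), _, by positivity, by positivity, by field_simp, rfl, ?_, ?_⟩
    · rw [← Real.mul_rpow (by positivity) (by positivity), mul_div_cancel₀ _ h.ne', r a ha]
    · rw [← Real.mul_rpow (by positivity) (by positivity), mul_div_cancel₀ _ h.ne', r b hb]

lemma yh_two_point {a b c e p q : ℝ} (ha : 0 ≤ a) (hb : 0 ≤ b) (hc : 0 ≤ c) (he : 0 ≤ e)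
    (hp : 0 < p) (hq : 0 < q) (hv : (1/p, 1/q) ∈ yhΩ) :
    (a*c)^2 + (a*e+b*c)^2 + (b*e)^2 ≤ ((a^p+b^p)^(1/p) * (c^q+e^q)^(1/q))^2 := by
  obtain ⟨α, β, N, hα, hβ, hab, hN, h1, h2⟩ := yh_norm ha hb hp
  obtain ⟨γ, δ, M, hγ, hδ, hcd, hM, h3, h4⟩ := yh_norm hc he hq
  have := yhΦ_nonneg hα hβ hγ hδ hab hcd hv
  unfold yhΦ at this
  simp only at this
  rw [← hN, ← hM, h1, h2, h3, h4]
  have := mul_le_mul_of_nonneg_left this (sq_nonneg (N*M))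
  refine le_trans (le_of_eq ?_) (this.trans (le_of_eq (mul_one _)))
  ring

lemma yh_fin_cube (d : ℕ) : {x : Fin d → ℤ | InCube x}.Finite := by
  have : (Set.pi Set.univ (fun _ : Fin d => ({0, 1} : Set ℤ))).Finite :=
    Set.Finite.pi (fun _ => by simp)
  refine this.subset ?_
  intro x hx i _
  simpa using hx i

lemma yh_fs {d : ℕ} {f : (Fin d → ℤ) → ℝ} (hf : SupportedInCube f) : (Function.support f).Finite := by
  refine (yh_fin_cube d).subset ?_
  intro x hx
  by_contra h
  exact hx (hf x h)

lemma yh_conv_fs {d : ℕ} {f g : (Fin d → ℤ) → ℝ} (hf : (Function.support f).Finite)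
    (hg : (Function.support g).Finite) : (Function.support (cconv f g)).Finite := by
  refine (Set.Finite.image2 (fun a b => a + b) hf hg).subset ?_
  intro m hm
  by_contra h
  apply hm
  unfold cconv
  convert tsum_zero with u
  by_contra h2
  exact h ⟨u, left_ne_zero_of_mul h2, m - u, right_ne_zero_of_mul h2, by simp⟩

lemma yh_abs_fs {ι : Type*} {f : ι → ℝ} (hf : (Function.support f).Finite) {s : ℝ} (hs : 0 < s) :
    (Function.support (fun x => |f x|^s)).Finite := by
  refine hf.subset ?_
  intro x hx h
  apply hx
  simp [h, Real.zero_rpow hs.ne']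

lemma yh_slice {d : ℕ} (F : (Fin (d+1) → ℤ) → ℝ) (hF : (Function.support F).Finite) (s : Finset ℤ)
    (hs : ∀ k ∉ s, ∀ x : Fin d → ℤ, F (Fin.cons k x) = 0) :
    ∑' x, F x = ∑ k ∈ s, ∑' x : Fin d → ℤ, F (Fin.cons k x) := by
  have h1 := (Fin.consEquiv (fun _ : Fin (d+1) => ℤ)).tsum_eq F
  rw [← h1]
  have hsum : Summable (fun c => F ((Fin.consEquiv (fun _ : Fin (d+1) => ℤ)) c)) :=
    (Fin.consEquiv (fun _ : Fin (d+1) => ℤ)).summable_iff.2 (summable_of_finite_support hF)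
  rw [Summable.tsum_prod hsum, tsum_eq_sum (s := s)]
  · rfl
  · intro k hk
    convert tsum_zero with x
    exact hs k hk x

/-- slice of a function -/
def yhs {d : ℕ} (f : (Fin (d+1) → ℤ) → ℝ) (k : ℤ) : (Fin d → ℤ) → ℝ := fun x => f (Fin.cons k x)

lemma yhs_supp {d : ℕ} {f : (Fin (d+1) → ℤ) → ℝ} (hf : SupportedInCube f) (k : ℤ) :
    SupportedInCube (yhs f k) := by
  intro x hx
  apply hf
  intro h
  apply hx
  intro i
  simpa using h i.succ

lemma yhs_zero {d : ℕ} {f : (Fin (d+1) → ℤ) → ℝ} (hf : SupportedInCube f) {k : ℤ}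
    (h0 : k ≠ 0) (h1 : k ≠ 1) : yhs f k = 0 := by
  funext x
  apply hf
  intro h
  have := h 0
  simp at this
  omega

lemma yhs_conv {d : ℕ} {f g : (Fin (d+1) → ℤ) → ℝ} (hf : SupportedInCube f) (k : ℤ) :
    yhs (cconv f g) k = fun m => cconv (yhs f 0) (yhs g k) m + cconv (yhs f 1) (yhs g (k-1)) m := by
  funext m
  show ∑' u : Fin (d+1) → ℤ, f u * g (Fin.cons k m - u) = _
  rw [yh_slice _ ?fin {0, 1} ?van]
  · rw [Finset.sum_pair (by norm_num)]
    have e : ∀ (i : ℤ) (x : Fin d → ℤ), (Fin.cons k m - Fin.cons i x : Fin (d+1) → ℤ) = Fin.cons (k-i) (m-x) := by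
      intro i x
      funext j
      refine Fin.cases ?_ (fun j => ?_) j <;> simp
    simp only [e, sub_zero]
    rfl
  case fin =>
    refine (yh_fs hf).subset ?_
    intro u hu
    exact left_ne_zero_of_mul hu
  case van =>
    intro i hi x
    simp at hi
    have := congrFun (yhs_zero hf hi.1 hi.2) x
    simp only [yhs] at this
    simp [this]

lemma lnorm_nonneg {d : ℕ} (s : ℝ) (f : (Fin d → ℤ) → ℝ) : 0 ≤ lnorm s f :=
  Real.rpow_nonneg (tsum_nonneg fun _ => Real.rpow_nonneg (abs_nonneg _) _) _

lemma lnorm_rpow {d : ℕ} {s : ℝ} (hs : 0 < s) (f : (Fin d → ℤ) → ℝ) :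
    lnorm s f ^ s = ∑' x, |f x|^s := by
  unfold lnorm
  rw [← Real.rpow_mul (tsum_nonneg fun _ => Real.rpow_nonneg (abs_nonneg _) _),
    one_div_mul_cancel hs.ne', Real.rpow_one]

lemma lnorm_slice {d : ℕ} {s : ℝ} (hs : 0 < s) (f : (Fin (d+1) → ℤ) → ℝ) (hf : (Function.support f).Finite)
    (t : Finset ℤ) (ht : ∀ k ∉ t, yhs f k = 0) :
    lnorm s f ^ s = ∑ k ∈ t, lnorm s (yhs f k) ^ s := by
  rw [lnorm_rpow hs, yh_slice _ (yh_abs_fs hf hs) t]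
  · apply Finset.sum_congr rfl
    intro k _
    rw [lnorm_rpow hs]; rfl
  · intro k hk x
    have := congrFun (ht k hk) x
    simp only [yhs] at this
    simp [this, Real.zero_rpow hs.ne']

lemma lnorm_add {d : ℕ} {u v : (Fin d → ℤ) → ℝ} (hu : (Function.support u).Finite)
    (hv : (Function.support v).Finite) : lnorm 2 (fun x => u x + v x) ≤ lnorm 2 u + lnorm 2 v := by
  obtain ⟨h1, h2⟩ := Real.Lp_add_le_tsum_of_nonneg (p := 2) (f := fun x => |u x|) (g := fun x => |v x|)
    (by norm_num) (fun _ => abs_nonneg _) (fun _ => abs_nonneg _)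
    (summable_of_finite_support (yh_abs_fs hu (by norm_num)))
    (summable_of_finite_support (yh_abs_fs hv (by norm_num)))
  refine le_trans ?_ h2
  unfold lnorm
  have hle : ∀ x, |u x + v x|^(2:ℝ) ≤ (|u x| + |v x|)^(2:ℝ) := fun x =>
    Real.rpow_le_rpow (abs_nonneg _) (abs_add_le _ _) (by norm_num)
  apply Real.rpow_le_rpow (tsum_nonneg fun _ => Real.rpow_nonneg (abs_nonneg _) _) _ (by norm_num)
  exact Summable.tsum_le_tsum hle (Summable.of_nonneg_of_le (fun _ => Real.rpow_nonneg (abs_nonneg _) _) hle h1) h1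

lemma cconv_zero_right {d : ℕ} (f : (Fin d → ℤ) → ℝ) : cconv f 0 = 0 := by
  funext m; simp [cconv]

lemma yh_main (p q : ℝ) (hp : 0 < p) (hq : 0 < q) (hv : (1/p, 1/q) ∈ yhΩ) (d : ℕ) :
    ∀ f g : (Fin d → ℤ) → ℝ, SupportedInCube f → SupportedInCube g →
      lnorm 2 (cconv f g) ≤ lnorm p f * lnorm q g := by
  induction d with
  | zero =>
    intro f g _ _
    have r : ∀ (s : ℝ), 0 < s → ∀ h : (Fin 0 → ℤ) → ℝ, lnorm s h = |h default| := by
      intro s hs h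
      unfold lnorm
      rw [tsum_eq_single default (fun b hb => absurd (Subsingleton.elim _ _) hb),
        ← Real.rpow_mul (abs_nonneg _), mul_one_div_cancel hs.ne', Real.rpow_one]
    rw [r 2 (by norm_num), r p hp, r q hq, ← abs_mul]
    unfold cconv
    rw [tsum_eq_single default (fun b hb => absurd (Subsingleton.elim _ _) hb),
      Subsingleton.elim (default - default : Fin 0 → ℤ) default]
  | succ d ih =>
    intro f g hf hg
    have F := fun k => yhs_supp hf k
    have G := fun k => yhs_supp hg k
    have hcf : ∀ i j, (Function.support (cconv (yhs f i) (yhs g j))).Finite :=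
      fun i j => yh_conv_fs (yh_fs (F i)) (yh_fs (G j))
    have z : ∀ k, k ≠ 0 → k ≠ 1 → yhs g k = 0 := fun k => yhs_zero hg
    have hn : ∀ (s : ℝ), 0 < s → ∀ h : (Fin (d+1) → ℤ) → ℝ, SupportedInCube h →
        lnorm s h = (lnorm s (yhs h 0)^s + lnorm s (yhs h 1)^s)^(1/s) := by
      intro s hs h hh
      have := lnorm_slice hs h (yh_fs hh) {0, 1} (by
        intro k hk
        simp at hk
        exact yhs_zero hh hk.1 hk.2)
      rw [Finset.sum_pair (by norm_num)] at this
      rw [← this, ← Real.rpow_mul (lnorm_nonneg _ _), mul_one_div_cancel hs.ne', Real.rpow_one]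
    have hc := lnorm_slice (s := 2) (by norm_num) (cconv f g) (yh_conv_fs (yh_fs hf) (yh_fs hg)) {0, 1, 2} (by
      intro k hk
      simp at hk
      rw [yhs_conv hf, z k hk.1 hk.2.1, z (k-1) (by omega) (by omega)]
      funext m
      simp [cconv_zero_right])
    rw [Finset.sum_insert (by norm_num), Finset.sum_pair (by norm_num)] at hc
    simp only [Real.rpow_two] at hc
    have k0 : yhs (cconv f g) 0 = cconv (yhs f 0) (yhs g 0) := by
      rw [yhs_conv hf, z (0-1) (by norm_num) (by norm_num)]
      funext m; simp [cconv_zero_right]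
    have k2 : yhs (cconv f g) 2 = cconv (yhs f 1) (yhs g 1) := by
      rw [yhs_conv hf, z 2 (by norm_num) (by norm_num)]
      funext m; simp [cconv_zero_right]
    have k1 : yhs (cconv f g) 1 = fun m => cconv (yhs f 0) (yhs g 1) m + cconv (yhs f 1) (yhs g 0) m := by
      rw [yhs_conv hf]; simp
    have b0 := ih _ _ (F 0) (G 0)
    have b2 := ih _ _ (F 1) (G 1)
    have b1 := (lnorm_add (hcf 0 1) (hcf 1 0)).trans (add_le_add (ih _ _ (F 0) (G 1)) (ih _ _ (F 1) (G 0)))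
    rw [← k0] at b0
    rw [← k1] at b1
    rw [← k2] at b2
    have tp := yh_two_point (lnorm_nonneg p (yhs f 0)) (lnorm_nonneg p (yhs f 1))
      (lnorm_nonneg q (yhs g 0)) (lnorm_nonneg q (yhs g 1)) hp hq hv
    rw [← hn p hp f hf, ← hn q hq g hg] at tp
    refine le_of_sq_le_sq (le_trans ?_ tp) (mul_nonneg (lnorm_nonneg _ _) (lnorm_nonneg _ _))
    rw [hc]
    have s0 := pow_le_pow_left₀ (lnorm_nonneg _ _) b0 2
    have s1 := pow_le_pow_left₀ (lnorm_nonneg _ _) b1 2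
    have s2 := pow_le_pow_left₀ (lnorm_nonneg _ _) b2 2
    linarith

theorem young_hypercube_r_two_pentagon (d : ℕ) (hd : 1 ≤ d)
    (p q : ℝ≥0∞) (hp : 1 ≤ p) (hq : 1 ≤ q)
    (hΩ : ((1 / p).toReal, (1 / q).toReal) ∈
      convexHull ℝ ({(1 / 2, 1), (1, 1), (1, 1 / 2),
        (3 / 4, Real.logb 2 3 / 2 - 1 / 4),
        (Real.logb 2 3 / 2 - 1 / 4, 3 / 4)} : Set (ℝ × ℝ)))
    (f g : (Fin d → ℤ) → ℝ) (hf : SupportedInCube f) (hg : SupportedInCube g) :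
    lnorm 2 (cconv f g) ≤ lnormE p f * lnormE q g := by
  obtain ⟨h1, h2⟩ := yhΩ_half hΩ
  have key : ∀ s : ℝ≥0∞, 1/2 ≤ (1/s).toReal → s ≠ ∞ ∧ 0 < s.toReal ∧ (1/s).toReal = 1/s.toReal := by
    intro s hs
    have e : (1/s).toReal = 1/s.toReal := by simp
    have hpos : 0 < s.toReal := by
      rcases (ENNReal.toReal_nonneg (a := s)).eq_or_lt with h | h
      · rw [e, ← h] at hs; norm_num at hs
      · exact h
    refine ⟨?_, hpos, e⟩
    rintro rfl
    simp at hpos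
  obtain ⟨p1, p2, p3⟩ := key p h1
  obtain ⟨q1, q2, q3⟩ := key q h2
  rw [p3, q3] at hΩ
  have := yh_main p.toReal q.toReal p2 q2 hΩ d f g hf hg
  unfold lnormE
  rw [if_neg p1, if_neg q1]
  exact this
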